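/- Let A, B be unital C*-algebras and P : A → B an orthogonally additive n-homogeneous polynomial such that h := P(1) is unitary, B = span P(A), and ‖P(x)‖ = ‖x‖ⁿ for every normal element x of A. Then there is a Jordan *-isomorphism J : A → B such that P(a) = h J(a)ⁿ for all a ∈ A. -/

import Mathlib

/-- `P : E → F` is a bounded `n`-homogeneous polynomial: `P x = L(x,…,x)` for a bounded
symmetric `n`-linear map `L`. -/
def IsHomogPolynomial {E F : Type*} [NormedAddCommGroup E] [NormedSpace ℂ E]
    [NormedAddCommGroup F] [NormedSpace ℂ F] (n : ℕ) (P : E → F) : Prop :=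
  ∃ L : ContinuousMultilinearMap ℂ (fun _ : Fin n => E) F,
    (∀ (v : Fin n → E) (σ : Equiv.Perm (Fin n)), (L fun i => v (σ i)) = L v) ∧
    ∀ x : E, P x = L fun _ => x


/-- Alternating sums over subsets vanish if the summand does not see one of the elements. -/
lemma oap_alt_sum {ι B : Type*} [Fintype ι] [DecidableEq ι] [AddCommGroup B] [Module ℂ B]
    (f : Finset ι → B) (i0 : ι) (h : ∀ S, i0 ∉ S → f (insert i0 S) = f S) :
    ∑ S : Finset ι, ((-1 : ℂ) ^ S.card) • f S = 0 := by
  have hu : (Finset.univ : Finset (Finset ι)) =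
      (insert i0 (Finset.univ.erase i0)).powerset := by
    rw [Finset.insert_erase (Finset.mem_univ _), Finset.powerset_univ]
  rw [hu, Finset.sum_powerset_insert (by simp), ← Finset.sum_add_distrib]
  refine Finset.sum_eq_zero fun S hS => ?_
  have hi : i0 ∉ S := fun hi => by
    have := (Finset.mem_powerset.1 hS) hi
    simp at this
  rw [Finset.card_insert_of_notMem hi, h S hi, pow_succ]
  simp

/-- Polarization formula. -/
lemma oap_polarization {A B : Type*} [NormedAddCommGroup A] [NormedSpace ℂ A]
    [NormedAddCommGroup B] [NormedSpace ℂ B] {n : ℕ}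
    (L : ContinuousMultilinearMap ℂ (fun _ : Fin n => A) B)
    (hL : ∀ (v : Fin n → A) (σ : Equiv.Perm (Fin n)), (L fun i => v (σ i)) = L v)
    (g : Fin n → A) :
    ∑ S : Finset (Fin n), ((-1 : ℂ) ^ S.card) • L (fun _ => ∑ i ∈ S, g i)
      = ((-1 : ℂ) ^ n * (n.factorial : ℂ)) • L g := by
  classical
  have h1 : ∀ S : Finset (Fin n), L (fun _ => ∑ i ∈ S, g i) =
      ∑ J : Fin n → Fin n, if ∀ k, J k ∈ S then L (fun k => g (J k)) else 0 := by
    intro S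
    rw [L.map_sum_finset (fun _ j => g j) (fun _ => S), ← Finset.sum_filter]
    refine Finset.sum_congr ?_ fun _ _ => rfl
    ext J; simp [Fintype.mem_piFinset]
  simp_rw [h1, Finset.smul_sum]
  rw [Finset.sum_comm]
  have h2 : ∀ J : Fin n → Fin n, ∑ S : Finset (Fin n), ((-1 : ℂ) ^ S.card) •
      (if ∀ k, J k ∈ S then L (fun k => g (J k)) else 0) =
      if Function.Bijective J then ((-1 : ℂ) ^ n) • L g else 0 := by
    intro J
    split_ifs with hJ
    · rw [Finset.sum_eq_single Finset.univ]
      · simp only [Finset.mem_univ, implies_true, if_true, Finset.card_univ, Fintype.card_fin]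
        rw [← hL g (Equiv.ofBijective J hJ)]
        rfl
      · intro S _ hS
        rw [if_neg, smul_zero]
        intro hall
        apply hS
        ext i
        obtain ⟨k, rfl⟩ := hJ.2 i
        simp [hall k]
      · simp
    · have hs : ¬ Function.Surjective J := fun hs => hJ (Finite.surjective_iff_bijective.1 hs)
      simp only [Function.Surjective, not_forall, not_exists] at hs
      obtain ⟨i0, hi0⟩ := hs
      refine oap_alt_sum _ i0 fun S _ => ?_
      have : (∀ k, J k ∈ insert i0 S) ↔ ∀ k, J k ∈ S := by
        simp only [Finset.mem_insert, hi0, false_or]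
      simp only [this]
  simp_rw [h2]
  rw [← Finset.sum_filter, Finset.sum_const, mul_comm, mul_smul, ← Nat.cast_smul_eq_nsmul ℂ]
  congr 2
  have : (Finset.univ.filter fun J : Fin n → Fin n => Function.Bijective J).card
      = Fintype.card (Equiv.Perm (Fin n)) := by
    rw [← Fintype.card_subtype]
    exact Fintype.card_congr ⟨fun J => Equiv.ofBijective J.1 J.2, fun σ => ⟨σ, σ.bijective⟩,
      fun _ => rfl, fun _ => by ext; rfl⟩
  rw [this, Fintype.card_perm, Fintype.card_fin]

/-- A symmetric multilinear map whose diagonal is orthogonally additive vanishes at tuples which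
split into two mutually orthogonal parts. -/
lemma oap_vanish {A B : Type*} [CStarAlgebra A]
    [NormedAddCommGroup B] [NormedSpace ℂ B] {n : ℕ}
    (L : ContinuousMultilinearMap ℂ (fun _ : Fin n => A) B)
    (hL : ∀ (v : Fin n → A) (σ : Equiv.Perm (Fin n)), (L fun i => v (σ i)) = L v)
    (horth : ∀ a b : A, a * b = 0 → b * a = 0 →
      L (fun _ => a + b) = L (fun _ => a) + L (fun _ => b))
    (g : Fin n → A) (p : Fin n → Prop) (i0 i1 : Fin n) (h0 : p i0) (h1 : ¬ p i1)
    (hg : ∀ i j, p i → ¬ p j → g i * g j = 0 ∧ g j * g i = 0) : L g = 0 := by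
  classical
  have key := oap_polarization L hL g
  have hsplit : ∀ S : Finset (Fin n), L (fun _ => ∑ i ∈ S, g i) =
      L (fun _ => ∑ i ∈ S with p i, g i) + L (fun _ => ∑ i ∈ S with ¬ p i, g i) := by
    intro S
    rw [← horth]
    · simp only [Finset.sum_filter_add_sum_filter_not]
    · rw [Finset.sum_mul_sum]
      refine Finset.sum_eq_zero fun i hi => Finset.sum_eq_zero fun j hj => ?_
      exact (hg i j (Finset.mem_filter.1 hi).2 (Finset.mem_filter.1 hj).2).1
    · rw [Finset.sum_mul_sum]
      refine Finset.sum_eq_zero fun i hi => Finset.sum_eq_zero fun j hj => ?_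
      exact (hg j i (Finset.mem_filter.1 hj).2 (Finset.mem_filter.1 hi).2).2
  rw [Finset.sum_congr rfl (fun S _ => by rw [hsplit S, smul_add]),
    Finset.sum_add_distrib] at key
  rw [oap_alt_sum (fun S => L (fun _ => ∑ i ∈ S with p i, g i)) i1,
    oap_alt_sum (fun S => L (fun _ => ∑ i ∈ S with ¬ p i, g i)) i0] at key
  · have hne : ((-1 : ℂ) ^ n * (n.factorial : ℂ)) ≠ 0 := by
      have := Nat.factorial_ne_zero n
      simp [this]
    rw [add_zero] at key
    exact (smul_eq_zero.1 key.symm).resolve_left hne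
  · intro S _
    rw [Finset.filter_insert, if_neg (not_not.2 h0)]
  · intro S _
    rw [Finset.filter_insert, if_neg h1]

/-- Diagonal lemma: averaging over signs. -/
lemma oap_diag {ι E B : Type*} [Fintype ι] [DecidableEq ι] [NormedAddCommGroup E] [NormedSpace ℂ E]
    [NormedAddCommGroup B] [NormedSpace ℂ B] {m : ℕ}
    (L : ContinuousMultilinearMap ℂ (fun _ : Fin (m + 1) => E) B)
    (v : Fin (m + 1) → ι → E)
    (hv : ∀ k (a : ι → ℂ) (C : ℝ), 0 ≤ C → (∀ j, ‖a j‖ ≤ C) → ‖∑ j, a j • v k j‖ ≤ C)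
    (c : ι → ℂ) (C : ℝ) (hC : 0 ≤ C) (hc : ∀ j, ‖c j‖ ≤ C) :
    ‖∑ j, c j • L (fun k => v k j)‖ ≤ ‖L‖ * C := by
  classical
  let s : ℤˣ → ℂ := fun u => ((u : ℤ) : ℂ)
  have hs : ∀ u, ‖s u‖ = 1 := by
    intro u; rcases Int.units_eq_one_or u with rfl | rfl <;> simp [s]
  let w : (Fin m → ι → ℤˣ) → Fin (m + 1) → ι → ℂ := fun ε =>
    Fin.cons (fun j => c j * ∏ k, s (ε k j)) (fun k j => s (ε k j))
  have horth : ∀ i j : ι, ∑ η : ι → ℤˣ, s (η i) * s (η j) =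
      if i = j then (Fintype.card (ι → ℤˣ) : ℂ) else 0 := by
    intro i j
    split_ifs with hij
    · subst hij
      have : ∀ u, s u * s u = 1 := by
        intro u; rcases Int.units_eq_one_or u with rfl | rfl <;> simp [s]
      simp [this]
    · refine Finset.sum_involution (fun η _ => Function.update η i (- η i)) ?_ ?_ ?_ ?_
      · intro η _
        simp [Function.update_of_ne (Ne.symm hij), s]
      · intro η _ _ h
        have := congrFun h i
        simp at this
      · simp
      · intro η _
        simp
  have hmain : ∑ ε : Fin m → ι → ℤˣ, L (fun k => ∑ j, w ε k j • v k j) =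
      ((Fintype.card (ι → ℤˣ) : ℂ) ^ m) • ∑ j, c j • L (fun k => v k j) := by
    have e1 : ∀ ε : Fin m → ι → ℤˣ, L (fun k => ∑ j, w ε k j • v k j) =
        ∑ J : Fin (m + 1) → ι, (c (J 0) * ∏ k : Fin m, (s (ε k (J 0)) * s (ε k (J k.succ)))) •
          L (fun k => v k (J k)) := by
      intro ε
      rw [L.map_sum]
      refine Finset.sum_congr rfl fun J _ => ?_
      rw [L.map_smul_univ (fun k => w ε k (J k))]
      congr 1
      rw [Fin.prod_univ_succ]
      simp [w, Finset.prod_mul_distrib, mul_assoc]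
    simp_rw [e1]
    rw [Finset.sum_comm]
    have e2 : ∀ J : Fin (m + 1) → ι, ∑ ε : Fin m → ι → ℤˣ,
        (c (J 0) * ∏ k : Fin m, (s (ε k (J 0)) * s (ε k (J k.succ)))) • L (fun k => v k (J k))
        = if (∀ k : Fin m, J 0 = J k.succ) then
          ((Fintype.card (ι → ℤˣ) : ℂ) ^ m * c (J 0)) • L (fun k => v k (J 0)) else 0 := by
      intro J
      rw [← Finset.sum_smul, ← Finset.mul_sum]
      have e3 : ∑ ε : Fin m → ι → ℤˣ, ∏ k : Fin m, (s (ε k (J 0)) * s (ε k (J k.succ))) =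
          ∏ k : Fin m, ∑ η : ι → ℤˣ, (s (η (J 0)) * s (η (J k.succ))) := by
        rw [Finset.prod_univ_sum, Fintype.piFinset_univ]
      rw [e3]
      simp_rw [horth]
      split_ifs with hJ
      · have : J = fun _ => J 0 := by
          funext k
          refine Fin.cases rfl (fun k => (hJ k).symm) k
        have h2 : (fun k => v k (J k)) = fun k => v k (J 0) := by
          funext k; rw [congrFun this k]
        rw [h2]
        congr 1
        rw [Finset.prod_congr rfl (fun k _ => if_pos (hJ k))]
        simp [mul_comm]
      · simp only [not_forall] at hJ
        obtain ⟨k, hk⟩ := hJ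
        rw [Finset.prod_eq_zero (Finset.mem_univ k) (if_neg hk)]
        simp
    simp_rw [e2]
    rw [← Finset.sum_filter, Finset.smul_sum]
    symm
    refine Finset.sum_bij' (fun j _ => fun _ => j) (fun J _ => J 0) ?_ ?_ ?_ ?_ ?_
    · simp
    · simp
    · simp
    · intro J hJ
      have hJ := (Finset.mem_filter.1 hJ).2
      funext k
      refine Fin.cases rfl (fun k => (hJ k)) k
    · intro j _
      rw [smul_smul]
  have hK : 0 < (Fintype.card (ι → ℤˣ) : ℝ) := by
    exact_mod_cast Fintype.card_pos
  have hbound : ‖∑ ε : Fin m → ι → ℤˣ, L (fun k => ∑ j, w ε k j • v k j)‖ ≤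
      (Fintype.card (ι → ℤˣ) : ℝ) ^ m * (‖L‖ * C) := by
    have : ∀ ε ∈ (Finset.univ : Finset (Fin m → ι → ℤˣ)),
        ‖L (fun k => ∑ j, w ε k j • v k j)‖ ≤ ‖L‖ * C := by
      intro ε _
      refine (L.le_opNorm _).trans ?_
      gcongr
      rw [Fin.prod_univ_succ]
      have h0 : ‖∑ j, w ε 0 j • v 0 j‖ ≤ C := by
        refine hv 0 _ C hC fun j => ?_
        simp [w, hs, hc]
      have h1 : ∀ k : Fin m, ‖∑ j, w ε k.succ j • v k.succ j‖ ≤ 1 := by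
        intro k
        refine hv _ _ 1 zero_le_one fun j => ?_
        simp [w, hs]
      calc _ ≤ C * 1 := by
            gcongr
            exact Finset.prod_le_one (fun _ _ => norm_nonneg _) fun k _ => h1 k
        _ = C := mul_one _
    refine (norm_sum_le_of_le _ this).trans ?_
    simp
  rw [hmain, norm_smul, norm_pow, Complex.norm_natCast] at hbound
  exact le_of_mul_le_mul_left hbound (by positivity)

/-- A tuple of integers that is spread out has a gap. -/
lemma oap_gap {m : ℕ} (J : Fin (m + 1) → ℤ) (k l : Fin (m + 1)) (h : J k + m < J l) :
    ∃ t, J k < t ∧ t < J l ∧ ∀ i, J i ≠ t := by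
  classical
  by_contra! hcon
  have hsub : Finset.Icc (J k) (J l) ⊆ Finset.univ.image J := by
    intro t ht
    rw [Finset.mem_Icc] at ht
    simp only [Finset.mem_image, Finset.mem_univ, true_and]
    rcases eq_or_lt_of_le ht.1 with h1 | h1
    · exact ⟨k, h1⟩
    rcases eq_or_lt_of_le ht.2 with h2 | h2
    · exact ⟨l, h2.symm⟩
    exact hcon t h1 h2
  have h1 := Finset.card_le_card hsub
  have h2 : (Finset.univ.image J).card ≤ m + 1 := by
    simpa using Finset.card_image_le (s := Finset.univ) (f := J)
  rw [Int.card_Icc] at h1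
  omega

lemma oap_cluster {A B : Type*} [CStarAlgebra A]
    [NormedAddCommGroup B] [NormedSpace ℂ B] {m : ℕ}
    (L : ContinuousMultilinearMap ℂ (fun _ : Fin (m + 1) => A) B)
    (hL : ∀ (v : Fin (m + 1) → A) (σ : Equiv.Perm (Fin (m + 1))), (L fun i => v (σ i)) = L v)
    (horth : ∀ a b : A, a * b = 0 → b * a = 0 →
      L (fun _ => a + b) = L (fun _ => a) + L (fun _ => b))
    (e : ℤ → A) (he : ∀ i j, i + 1 < j → e i * e j = 0 ∧ e j * e i = 0)
    (S : Finset ℤ)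
    (hv : ∀ (t : ℤ) (a : S → ℂ) (C : ℝ), 0 ≤ C → (∀ j, ‖a j‖ ≤ C) →
      ‖∑ j : S, a j • e (j + t)‖ ≤ C)
    (c : (Fin (m + 1) → ℤ) → ℂ) (C : ℝ) (hC : 0 ≤ C)
    (hc : ∀ J, (∀ k, J k ∈ S) → (∀ k, |J k - J 0| ≤ (m : ℤ)) → ‖c J‖ ≤ C) :
    ‖∑ J ∈ Fintype.piFinset (fun _ : Fin (m + 1) => S), c J • L (fun k => e (J k))‖
      ≤ (2 * m + 1) ^ m * (‖L‖ * C) := by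
  classical
  have hvan : ∀ J : Fin (m + 1) → ℤ, (∃ k l, J k + m < J l) → L (fun k => e (J k)) = 0 := by
    rintro J ⟨k, l, hkl⟩
    obtain ⟨t, h1, h2, h3⟩ := oap_gap J k l hkl
    refine oap_vanish L hL horth _ (fun i => J i < t) k l h1 (by simp; omega) ?_
    intro i j hi hj
    have := h3 j
    exact he _ _ (by omega)
  let o : (Fin (m + 1) → ℤ) → (Fin m → ℤ) := fun J k => J k.succ - J 0
  let O : Finset (Fin m → ℤ) := Fintype.piFinset (fun _ => Finset.Icc (-(m : ℤ)) m)
  have hO : (O.card : ℝ) = (2 * m + 1) ^ m := by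
    simp only [O, Fintype.card_piFinset, Int.card_Icc, Finset.prod_const, Finset.card_univ,
      Fintype.card_fin]
    have : ((m : ℤ) + 1 - -(m : ℤ)).toNat = 2 * m + 1 := by omega
    rw [this]; push_cast; ring
  have hfilt : ∑ J ∈ Fintype.piFinset (fun _ : Fin (m + 1) => S), c J • L (fun k => e (J k)) =
      ∑ J ∈ Fintype.piFinset (fun _ : Fin (m + 1) => S) with o J ∈ O,
        c J • L (fun k => e (J k)) := by
    symm
    refine Finset.sum_filter_of_ne fun J _ hne => ?_
    by_contra hno
    apply hne
    rw [hvan J, smul_zero]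
    simp only [O, o, Fintype.mem_piFinset, not_forall, Finset.mem_Icc] at hno
    obtain ⟨k, hk⟩ := hno
    by_cases h : J 0 + m < J k.succ
    · exact ⟨_, _, h⟩
    · exact ⟨k.succ, 0, by omega⟩
  rw [hfilt, ← Finset.sum_fiberwise_of_maps_to (t := O) (g := o)
    (fun J hJ => (Finset.mem_filter.1 hJ).2)]
  have hone : ∀ q ∈ O, ‖∑ J ∈ Fintype.piFinset (fun _ : Fin (m + 1) => S) with o J ∈ O ∧ o J = q,
        c J • L (fun k => e (J k))‖ ≤ ‖L‖ * C := by
    intro q hq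
    let T : ℤ → (Fin (m + 1) → ℤ) := fun j => Fin.cons j (fun k => j + q k)
    let v : Fin (m + 1) → S → A := fun k j => e (T j k)
    let c' : S → ℂ := fun j => if ∀ k, T j k ∈ S then c (T j) else 0
    have hd := oap_diag L v (by
      intro k a D hD ha
      refine Fin.cases ?_ (fun k => ?_) k
      · simpa [v, T] using hv 0 a D hD ha
      · simpa [v, T] using hv (q k) a D hD ha) c' C hC (by
      intro j
      simp only [c']
      split_ifs with h
      · refine hc _ h fun k => ?_
        refine Fin.cases ?_ (fun k => ?_) k
        · simp
        · have := (Fintype.mem_piFinset.1 hq) k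
          rw [Finset.mem_Icc] at this
          simp only [T, Fin.cons_succ, Fin.cons_zero, add_sub_cancel_left]
          exact abs_le.2 this
      · simpa using hC)
    refine le_trans (le_of_eq ?_) hd
    congr 1
    have hT : ∀ J, o J = q → T (J 0) = J := by
      rintro J rfl
      funext k
      refine Fin.cases ?_ (fun k => ?_) k <;> simp [T, o]
    symm
    rw [Finset.sum_coe_sort S (fun j => (if ∀ k, T j k ∈ S then c (T j) else 0) •
      L (fun k => e (T j k)))]
    simp_rw [ite_smul, zero_smul]
    rw [← Finset.sum_filter]
    refine Finset.sum_bij' (fun j _ => T j) (fun J _ => J 0) ?_ ?_ ?_ ?_ ?_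
    · intro j hj
      have hj := (Finset.mem_filter.1 hj).2
      have : o (T j) = q := by funext k; simp [o, T]
      simp only [Finset.mem_filter, Fintype.mem_piFinset, this]
      exact ⟨hj, hq, trivial⟩
    · intro J hJ
      simp only [Finset.mem_filter, Fintype.mem_piFinset] at hJ ⊢
      rw [hT J hJ.2.2]
      exact ⟨hJ.1 0, hJ.1⟩
    · intro j _; simp [T]
    · intro J hJ
      exact hT J (Finset.mem_filter.1 hJ).2.2
    · intro j _; rfl
  simp_rw [Finset.filter_filter]
  refine (norm_sum_le_of_le _ hone).trans ?_
  rw [Finset.sum_const, nsmul_eq_mul, hO]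

/-- The hat function. -/
noncomputable def oapHat (s : ℝ) : ℝ := max 0 (1 - |s|)

lemma oapHat_nonneg (s : ℝ) : 0 ≤ oapHat s := le_max_left _ _

lemma oapHat_eq_zero {s : ℝ} (h : 1 ≤ |s|) : oapHat s = 0 := max_eq_left (by linarith)

lemma oapHat_continuous : Continuous oapHat := by unfold oapHat; fun_prop

lemma oapHat_sum (s : ℝ) (S : Finset ℤ) (h0 : ⌊s⌋ ∈ S) (h1 : ⌊s⌋ + 1 ∈ S) (g : ℤ → ℝ) :
    ∑ j ∈ S, g j * oapHat (s - j) = g ⌊s⌋ * (1 - Int.fract s) + g (⌊s⌋ + 1) * Int.fract s := by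
  have hf0 := Int.fract_nonneg s
  have hf1 := Int.fract_lt_one s
  have hs := Int.floor_add_fract s
  rw [← Finset.sum_subset (s₁ := {⌊s⌋, ⌊s⌋ + 1})]
  · rw [Finset.sum_pair (by omega)]
    have e0 : oapHat (s - ⌊s⌋) = 1 - Int.fract s := by
      rw [Int.self_sub_floor, oapHat, abs_of_nonneg hf0, max_eq_right (by linarith)]
    have e1 : oapHat (s - ((⌊s⌋ + 1 : ℤ) : ℝ)) = Int.fract s := by
      have : s - ((⌊s⌋ + 1 : ℤ) : ℝ) = -(1 - Int.fract s) := by push_cast; linarith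
      rw [this, oapHat, abs_neg, abs_of_nonneg (by linarith), max_eq_right (by linarith)]
      ring
    rw [e0, e1]
  · intro j hj
    simp only [Finset.mem_insert, Finset.mem_singleton] at hj
    rcases hj with rfl | rfl <;> assumption
  · intro j _ hj
    simp only [Finset.mem_insert, Finset.mem_singleton, not_or] at hj
    rw [oapHat_eq_zero, mul_zero]
    rcases lt_or_gt_of_ne hj.1 with h | h
    · have : (j : ℝ) + 1 ≤ ⌊s⌋ := by exact_mod_cast h
      exact le_trans (by linarith) (le_abs_self _)
    · have h' : ⌊s⌋ + 2 ≤ j := by omega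
      have : (⌊s⌋ : ℝ) + 2 ≤ j := by exact_mod_cast h'
      exact le_trans (by linarith) (neg_le_abs _)

lemma oapHat_sum_le (s : ℝ) (S : Finset ℤ) : ∑ j ∈ S, oapHat (s - j) ≤ 1 := by
  have h := oapHat_sum s (S ∪ {⌊s⌋, ⌊s⌋ + 1}) (by simp) (by simp) (fun _ => 1)
  simp only [one_mul, sub_add_cancel] at h
  rw [← h]
  exact Finset.sum_le_sum_of_subset_of_nonneg Finset.subset_union_left
    fun _ _ _ => oapHat_nonneg _

lemma oap_prod_sub {n : ℕ} (a : Fin n → ℂ) (b : ℂ) (δ : ℝ) (ha : ∀ k, ‖a k‖ ≤ 1) (hb : ‖b‖ ≤ 1)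
    (h : ∀ k, ‖a k - b‖ ≤ δ) : ‖∏ k, a k - b ^ n‖ ≤ n * δ := by
  induction n with
  | zero => simp
  | succ n ih =>
    rw [Fin.prod_univ_succ, pow_succ']
    have e : a 0 * ∏ i : Fin n, a i.succ - b * b ^ n =
      a 0 * (∏ i : Fin n, a i.succ - b ^ n) + (a 0 - b) * b ^ n := by ring
    rw [e]
    refine (norm_add_le _ _).trans ?_
    rw [norm_mul, norm_mul, norm_pow]
    have h1 := ih (fun i => a i.succ) (fun k => ha _) (fun k => h _)
    have h2 : ‖b‖ ^ n ≤ 1 := pow_le_one₀ (norm_nonneg _) hb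
    calc _ ≤ 1 * (n * δ) + δ * 1 := by
          gcongr
          · exact ha 0
          · exact (norm_nonneg _).trans (h 0)
          · exact h 0
      _ = _ := by push_cast; ring

lemma oap_approx {A B : Type*} [CStarAlgebra A]
    [NormedAddCommGroup B] [NormedSpace ℂ B] {m : ℕ}
    (L : ContinuousMultilinearMap ℂ (fun _ : Fin (m + 1) => A) B)
    (hL : ∀ (v : Fin (m + 1) → A) (σ : Equiv.Perm (Fin (m + 1))), (L fun i => v (σ i)) = L v)
    (horth : ∀ a b : A, a * b = 0 → b * a = 0 →
      L (fun _ => a + b) = L (fun _ => a) + L (fun _ => b))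
    (x : A) (hx : IsSelfAdjoint x) (hx1 : ‖x‖ ≤ 1 / 2) (N : ℕ) (hN : 2 ≤ N) :
    ‖L (fun _ => x) - L (Fin.cons (x ^ (m + 1)) (fun _ => 1))‖ ≤
      ((2 * m + 1) ^ m * (‖L‖ * ((m + 1) * m)) + ‖L‖ * (m + 1)) / N := by
  classical
  have hxn : IsStarNormal x := hx.isStarNormal
  have hN0 : (0 : ℝ) < N := by exact_mod_cast (by omega : 0 < N)
  have hNC : (N : ℂ) ≠ 0 := by exact_mod_cast hN0.ne'
  let f : ℤ → ℂ → ℂ := fun j z => ((oapHat (N * z.re - j) : ℝ) : ℂ)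
  have hf : ∀ j, Continuous (f j) := fun j => by
    have := oapHat_continuous
    simp only [f]
    fun_prop
  let e : ℤ → A := fun j => cfc (f j) x
  let S : Finset ℤ := Finset.Icc (-(N : ℤ)) N
  let lam : ℤ → ℂ := fun j => (((j : ℝ) / N : ℝ) : ℂ)
  have hlam : ∀ j ∈ S, ‖lam j‖ ≤ 1 := by
    intro j hj
    simp only [S, Finset.mem_Icc] at hj
    simp only [lam, Complex.norm_real, Real.norm_eq_abs]
    rw [abs_div, Nat.abs_cast, div_le_one hN0, abs_le]
    exact ⟨by exact_mod_cast hj.1, by exact_mod_cast hj.2⟩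
  -- spectrum facts
  have hspec : ∀ z ∈ spectrum ℂ x, z = (z.re : ℂ) ∧ |z.re| ≤ 1 / 2 := by
    intro z hz
    refine ⟨hx.mem_spectrum_eq_re hz, ?_⟩
    have h1 := norm_apply_le_norm_cfc (fun z : ℂ => z) x hz
    rw [cfc_id' ℂ x] at h1
    exact (Complex.abs_re_le_norm z).trans (h1.trans hx1)
  have hfloor : ∀ z ∈ spectrum ℂ x, ⌊(N : ℝ) * z.re⌋ ∈ S ∧ ⌊(N : ℝ) * z.re⌋ + 1 ∈ S := by
    intro z hz
    have h2 := abs_le.1 (hspec z hz).2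
    have hN2 : (2 : ℝ) ≤ N := by exact_mod_cast hN
    have h3 : -(N : ℤ) ≤ ⌊(N : ℝ) * z.re⌋ := by
      rw [Int.le_floor]; push_cast; nlinarith
    have h4 : ⌊(N : ℝ) * z.re⌋ < N := by
      rw [Int.floor_lt]; push_cast; nlinarith
    simp only [S, Finset.mem_Icc]
    omega
  have hcomb : ∀ (T : Finset ℤ) (a : ℤ → ℂ),
      ∑ j ∈ T, a j • e j = cfc (fun z => ∑ j ∈ T, a j • f j z) x := by
    intro T a
    have e0 : (fun z => ∑ j ∈ T, a j • f j z) = ∑ j ∈ T, fun z => a j • f j z := by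
      funext z; simp
    rw [e0, cfc_sum (fun j z => a j • f j z) x T (fun j _ => by
      have := hf j
      fun_prop)]
    refine Finset.sum_congr rfl fun j _ => ?_
    rw [cfc_smul _ _ _ (hf j).continuousOn]
  have hinterp : ∀ z ∈ spectrum ℂ x, ∀ g : ℤ → ℝ, ∑ j ∈ S, (g j : ℂ) • f j z =
      ((g ⌊(N : ℝ) * z.re⌋ * (1 - Int.fract ((N : ℝ) * z.re)) +
        g (⌊(N : ℝ) * z.re⌋ + 1) * Int.fract ((N : ℝ) * z.re) : ℝ) : ℂ) := by
    intro z hz g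
    rw [← oapHat_sum _ S (hfloor z hz).1 (hfloor z hz).2 g]
    simp [f]
  have hone : ∑ j ∈ S, e j = 1 := by
    have := hcomb S (fun _ => 1)
    simp only [one_smul] at this
    rw [this, ← cfc_one ℂ x]
    refine cfc_congr fun z hz => ?_
    have := hinterp z hz (fun _ => 1)
    simpa using this
  have hsumx : ∑ j ∈ S, lam j • e j = x := by
    rw [hcomb]
    conv_rhs => rw [← cfc_id' ℂ x]
    refine cfc_congr fun z hz => ?_
    have := hinterp z hz (fun j => (j : ℝ) / N)
    refine this.trans ?_
    conv_rhs => rw [(hspec z hz).1]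
    congr 1
    have h5 := Int.floor_add_fract ((N : ℝ) * z.re)
    field_simp
    push_cast
    linarith
  have hhatle : ∀ (T : Finset ℤ) (z : ℂ), ∑ j ∈ T, ‖f j z‖ ≤ 1 := by
    intro T z
    refine le_trans (le_of_eq ?_) (oapHat_sum_le (N * z.re) T)
    refine Finset.sum_congr rfl fun j _ => ?_
    simp only [f, Complex.norm_real, Real.norm_eq_abs]
    exact abs_of_nonneg (oapHat_nonneg _)
  let y : A := ∑ j ∈ S, (lam j ^ (m + 1)) • e j
  have hy : ‖x ^ (m + 1) - y‖ ≤ (m + 1) / N := by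
    have e1 : x ^ (m + 1) - y = cfc (fun z => z ^ (m + 1) - ∑ j ∈ S, (lam j ^ (m + 1)) • f j z) x := by
      rw [cfc_sub (fun z : ℂ => z ^ (m + 1)) _ x (by fun_prop) (by
        refine Continuous.continuousOn ?_
        have := hf
        fun_prop), cfc_pow_id x (m + 1) hxn, ← hcomb]
    rw [e1]
    refine norm_cfc_le (by positivity) fun z hz => ?_
    have e2 : z ^ (m + 1) - ∑ j ∈ S, (lam j ^ (m + 1)) • f j z =
        ∑ j ∈ S, (z ^ (m + 1) - lam j ^ (m + 1)) * f j z := by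
      have := hinterp z hz (fun _ => 1)
      simp only [one_mul, sub_add_cancel, Complex.ofReal_one, one_smul] at this
      simp_rw [sub_mul, Finset.sum_sub_distrib, ← Finset.mul_sum]
      rw [this, mul_one]
      simp
    rw [e2]
    have e3 : ∀ j ∈ S, ‖(z ^ (m + 1) - lam j ^ (m + 1)) * f j z‖ ≤ ((m + 1) / N : ℝ) * ‖f j z‖ := by
      intro j hj
      rw [norm_mul]
      by_cases h6 : 1 ≤ |(N : ℝ) * z.re - j|
      · simp [f, oapHat_eq_zero h6]
      · gcongr
        have h7 := oap_prod_sub (fun _ : Fin (m + 1) => z) (lam j) (1 / N) (fun _ => by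
          rw [(hspec z hz).1, Complex.norm_real, Real.norm_eq_abs]
          linarith [(hspec z hz).2]) (hlam j hj) (fun _ => by
          rw [(hspec z hz).1]
          simp only [lam]
          rw [← Complex.ofReal_sub, Complex.norm_real, Real.norm_eq_abs]
          have : z.re - j / N = ((N : ℝ) * z.re - j) / N := by field_simp
          rw [this, abs_div, Nat.abs_cast]
          gcongr
          exact (not_le.1 h6).le)
        simp only [Finset.prod_const, Finset.card_univ, Fintype.card_fin] at h7
        refine h7.trans (le_of_eq ?_)
        push_cast
        ring
    refine (norm_sum_le_of_le _ e3).trans ?_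
    rw [← Finset.mul_sum]
    exact mul_le_of_le_one_right (by positivity) (hhatle S z)
  have he : ∀ i j, i + 1 < j → e i * e j = 0 ∧ e j * e i = 0 := by
    intro i j hij
    have hz : ∀ z, f i z * f j z = 0 := by
      intro z
      have h8 : 1 ≤ |(N : ℝ) * z.re - i| ∨ 1 ≤ |(N : ℝ) * z.re - j| := by
        by_contra! hcon
        have h9 := (abs_lt.1 hcon.1).2
        have h10 := (abs_lt.1 hcon.2).1
        have : (i : ℝ) + 2 ≤ j := by exact_mod_cast (by omega : i + 2 ≤ j)
        linarith
      rcases h8 with h8 | h8 <;> simp [f, oapHat_eq_zero h8]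
    constructor
    · simp only [e]
      rw [← cfc_mul _ _ x (hf i).continuousOn (hf j).continuousOn]
      simp [hz]
    · simp only [e]
      rw [← cfc_mul _ _ x (hf j).continuousOn (hf i).continuousOn]
      simp [mul_comm, hz]
  have hclust := oap_cluster L hL horth e he S (by
    intro t a C hC ha
    have e4 : ∑ j : S, a j • e (j + t) = cfc (fun z => ∑ j : S, a j • f (j + t) z) x := by
      have e0 : (fun z => ∑ j : S, a j • f (j + t) z) =
          ∑ j : S, fun z => a j • f (j + t) z := by
        funext z; simp
      rw [e0, cfc_sum (fun (j : S) z => a j • f (j + t) z) x Finset.univ (fun j _ => by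
        have := hf (j + t)
        fun_prop)]
      refine Finset.sum_congr rfl fun j _ => ?_
      rw [cfc_smul _ _ _ (hf _).continuousOn]
    rw [e4]
    refine norm_cfc_le hC fun z _ => ?_
    have e5 : ∀ j ∈ (Finset.univ : Finset S), ‖a j • f (j + t) z‖ ≤ C * ‖f (j + t) z‖ := by
      intro j _
      rw [norm_smul]
      gcongr
      exact ha j
    refine (norm_sum_le_of_le _ e5).trans ?_
    rw [← Finset.mul_sum]
    refine mul_le_of_le_one_right hC ?_
    rw [Finset.sum_coe_sort S (fun j => ‖f (j + t) z‖)]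
    have := hhatle (S.map (addRightEmbedding t)) z
    rw [Finset.sum_map] at this
    exact this) (fun J => ∏ k, lam (J k) - lam (J 0) ^ (m + 1)) ((m + 1) * m / N) (by positivity)
    (by
      intro J hJ hJ2
      have := oap_prod_sub (fun k => lam (J k)) (lam (J 0)) (m / N) (fun k => hlam _ (hJ k))
        (hlam _ (hJ 0)) (fun k => by
          simp only [lam]
          rw [← Complex.ofReal_sub, Complex.norm_real, Real.norm_eq_abs, ← sub_div, abs_div,
            Nat.abs_cast]
          gcongr
          exact_mod_cast hJ2 k)
      refine this.trans (le_of_eq ?_)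
      push_cast; ring)
  have hPx : L (fun _ => x) = ∑ J ∈ Fintype.piFinset (fun _ : Fin (m + 1) => S),
      (∏ k, lam (J k)) • L (fun k => e (J k)) := by
    conv_lhs => rw [← hsumx]
    rw [L.map_sum_finset (fun _ j => lam j • e j) (fun _ => S)]
    refine Finset.sum_congr rfl fun J _ => ?_
    rw [L.map_smul_univ (fun k => lam (J k))]
  have hTy : L (Fin.cons y (fun _ => 1)) = ∑ J ∈ Fintype.piFinset (fun _ : Fin (m + 1) => S),
      (lam (J 0) ^ (m + 1)) • L (fun k => e (J k)) := by
    let u : Fin (m + 1) → ℤ → ℂ := Fin.cons (fun j => lam j ^ (m + 1)) (fun _ _ => 1)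
    have : (Fin.cons y (fun _ => 1) : Fin (m + 1) → A) = fun k => ∑ j ∈ S, u k j • e j := by
      funext k
      refine Fin.cases ?_ (fun k => ?_) k
      · simp [u, y]
      · simp [u, hone]
    rw [this, L.map_sum_finset (fun k j => u k j • e j) (fun _ => S)]
    refine Finset.sum_congr rfl fun J _ => ?_
    rw [L.map_smul_univ (fun k => u k (J k))]
    congr 1
    rw [Fin.prod_univ_succ]
    simp [u]
  have hstep1 : ‖L (fun _ => x) - L (Fin.cons y (fun _ => 1))‖ ≤
      (2 * m + 1) ^ m * (‖L‖ * ((m + 1) * m / N)) := by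
    rw [hPx, hTy, ← Finset.sum_sub_distrib]
    simp_rw [← sub_smul]
    exact hclust
  have h1le : ‖(1 : A)‖ ≤ 1 := by
    rcases subsingleton_or_nontrivial A with h | h
    · rw [Subsingleton.elim (1 : A) 0]; simp
    · exact (CStarRing.norm_one).le
  have hstep2 : ‖L (Fin.cons y (fun _ => 1)) - L (Fin.cons (x ^ (m + 1)) (fun _ => 1))‖ ≤
      ‖L‖ * ((m + 1) / N) := by
    have e6 : L (Fin.cons y (fun _ => 1)) - L (Fin.cons (x ^ (m + 1)) (fun _ => 1)) =
        L (Fin.cons (y - x ^ (m + 1)) (fun _ => 1)) := by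
      have := L.cons_add (fun _ : Fin m => (1 : A)) (y - x ^ (m + 1)) (x ^ (m + 1))
      rw [sub_add_cancel] at this
      rw [this, add_sub_cancel_right]
    rw [e6]
    refine (L.le_opNorm _).trans ?_
    gcongr
    rw [Fin.prod_univ_succ]
    simp only [Fin.cons_zero, Fin.cons_succ]
    rw [norm_sub_rev]
    calc _ ≤ (m + 1 : ℝ) / N * 1 := by
          gcongr
          exact Finset.prod_le_one (fun _ _ => norm_nonneg _) fun _ _ => h1le
      _ = _ := mul_one _
  calc _ ≤ ‖L (fun _ => x) - L (Fin.cons y (fun _ => 1))‖ +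
        ‖L (Fin.cons y (fun _ => 1)) - L (Fin.cons (x ^ (m + 1)) (fun _ => 1))‖ :=
        norm_sub_le_norm_sub_add_norm_sub _ _ _
    _ ≤ (2 * m + 1) ^ m * (‖L‖ * ((m + 1) * m / N)) + ‖L‖ * ((m + 1) / N) := by gcongr
    _ = _ := by ring

/-- Representation of orthogonally additive polynomials on selfadjoint elements. -/
lemma oap_sa {A B : Type*} [CStarAlgebra A]
    [NormedAddCommGroup B] [NormedSpace ℂ B] {m : ℕ}
    (L : ContinuousMultilinearMap ℂ (fun _ : Fin (m + 1) => A) B)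
    (hL : ∀ (v : Fin (m + 1) → A) (σ : Equiv.Perm (Fin (m + 1))), (L fun i => v (σ i)) = L v)
    (horth : ∀ a b : A, a * b = 0 → b * a = 0 →
      L (fun _ => a + b) = L (fun _ => a) + L (fun _ => b))
    (x : A) (hx : IsSelfAdjoint x) :
    L (fun _ => x) = L (Fin.cons (x ^ (m + 1)) (fun _ => 1)) := by
  have small : ∀ x : A, IsSelfAdjoint x → ‖x‖ ≤ 1 / 2 →
      L (fun _ => x) = L (Fin.cons (x ^ (m + 1)) (fun _ => 1)) := by
    intro x hx hx1
    rw [← sub_eq_zero, ← norm_le_zero_iff]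
    refine ge_of_tendsto (tendsto_const_div_atTop_nhds_zero_nat
      ((2 * m + 1) ^ m * (‖L‖ * ((m + 1) * m)) + ‖L‖ * (m + 1))) ?_
    filter_upwards [Filter.eventually_ge_atTop 2] with N hN
    exact oap_approx L hL horth x hx hx1 N hN
  let r : ℝ := 2 * (‖x‖ + 1)
  have hr : 0 < r := by positivity
  have hrC : (r : ℂ) ≠ 0 := by exact_mod_cast hr.ne'
  have hs := small ((r⁻¹ : ℝ) • x) ((IsSelfAdjoint.all (r⁻¹ : ℝ)).smul hx) (by
    rw [norm_smul, Real.norm_eq_abs, abs_of_pos (by positivity)]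
    rw [inv_mul_le_iff₀ hr]
    simp only [r]
    linarith)
  have e1 : ((r⁻¹ : ℝ) • x : A) = ((r : ℂ)⁻¹) • x := by
    rw [← Complex.ofReal_inv, Complex.coe_smul]
  rw [e1, smul_pow, L.cons_smul (fun _ : Fin m => (1 : A)),
    L.map_smul_univ (fun _ : Fin (m + 1) => (r : ℂ)⁻¹) (fun _ => x)] at hs
  simp only [Finset.prod_const, Finset.card_univ, Fintype.card_fin] at hs
  exact (smul_right_injective B (pow_ne_zero (m + 1) (inv_ne_zero hrC))) hs

/-- Representation of orthogonally additive polynomials. -/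
lemma oap_repr {A B : Type*} [CStarAlgebra A]
    [NormedAddCommGroup B] [NormedSpace ℂ B] [CompleteSpace B] {m : ℕ}
    (L : ContinuousMultilinearMap ℂ (fun _ : Fin (m + 1) => A) B)
    (hL : ∀ (v : Fin (m + 1) → A) (σ : Equiv.Perm (Fin (m + 1))), (L fun i => v (σ i)) = L v)
    (horth : ∀ a b : A, a * b = 0 → b * a = 0 →
      L (fun _ => a + b) = L (fun _ => a) + L (fun _ => b))
    (x : A) :
    L (fun _ => x) = L (Fin.cons (x ^ (m + 1)) (fun _ => 1)) := by
  let a : A := (realPart x : A)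
  let b : A := (imaginaryPart x : A)
  have hx : x = a + Complex.I • b := (realPart_add_I_smul_imaginaryPart x).symm
  let F : ℂ → B := fun z => L (fun _ => a + z • b)
  let G : ℂ → B := fun z => L (Fin.cons ((a + z • b) ^ (m + 1)) (fun _ => 1))
  have hLd : ContDiff ℂ 1 L := L.contDiff
  have hF : Differentiable ℂ F := by
    refine (hLd.differentiable (by simp)).comp ?_
    refine differentiable_pi.2 fun k => ?_
    fun_prop
  have hG : Differentiable ℂ G := by
    refine (hLd.differentiable (by simp)).comp ?_
    refine differentiable_pi.2 fun k => ?_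
    refine Fin.cases ?_ (fun k => ?_) k
    · simp only [Fin.cons_zero]
      fun_prop
    · simp only [Fin.cons_succ]
      fun_prop
  have hreal : ∀ t : ℝ, F t = G t := by
    intro t
    refine oap_sa L hL horth _ ?_
    refine (realPart x).2.add ?_
    rw [Complex.coe_smul]
    exact (IsSelfAdjoint.all t).smul (imaginaryPart x).2
  have hFG : F = G := by
    refine AnalyticOnNhd.eq_of_frequently_eq (z₀ := 0)
      (fun z _ => hF.analyticAt z) (fun z _ => hG.analyticAt z) ?_
    have ht : Filter.Tendsto (fun t : ℝ => (t : ℂ)) (nhdsWithin 0 {0}ᶜ) (nhdsWithin 0 {0}ᶜ) := by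
      refine tendsto_nhdsWithin_iff.2 ⟨?_, ?_⟩
      · have : Filter.Tendsto (fun t : ℝ => (t : ℂ)) (nhds 0) (nhds ((0 : ℝ) : ℂ)) :=
          Complex.continuous_ofReal.tendsto 0
        rw [Complex.ofReal_zero] at this
        exact this.mono_left nhdsWithin_le_nhds
      · filter_upwards [self_mem_nhdsWithin] with t ht
        simpa using ht
    exact ht.frequently (Filter.Eventually.frequently (Filter.Eventually.of_forall hreal))
  have := congrFun hFG Complex.I
  simp only [F, G] at this
  rw [hx]
  exact this

lemma oap_bernstein {A B : Type*} [CStarAlgebra A] [CStarAlgebra B]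
    [PartialOrder A] [StarOrderedRing A] [PartialOrder B] [StarOrderedRing B]
    (T : A →ₗ[ℝ] B) (hT1 : T 1 = 1) (hT : ∀ a, 0 ≤ a → 0 ≤ T a) (b : A) (hb0 : 0 ≤ b)
    (hb1 : b ≤ 1) (N : ℕ) :
    ((N * N : ℕ)) • (T b * T b) ≤ (N * (N - 1)) • T (b ^ 2) + N • T b := by
  have hbs : IsSelfAdjoint b := IsSelfAdjoint.of_nonneg hb0
  let e : ℕ → A := fun k => Polynomial.aeval b (bernsteinPolynomial ℝ N k)
  have he : ∀ k, 0 ≤ e k := by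
    intro k
    simp only [e]
    rw [← cfc_polynomial (bernsteinPolynomial ℝ N k) b hbs]
    refine cfc_nonneg fun t ht => ?_
    have ht0 : 0 ≤ t := spectrum_nonneg_of_nonneg hb0 ht
    have ht1 : t ≤ 1 := by
      have h1 : b ≤ algebraMap ℝ A 1 := by simpa using hb1
      exact (le_algebraMap_iff_spectrum_le hbs).1 h1 t ht
    simp only [bernsteinPolynomial, Polynomial.eval_mul, Polynomial.eval_pow, Polynomial.eval_sub,
      Polynomial.eval_X, Polynomial.eval_one, Polynomial.eval_natCast]
    have : 0 ≤ 1 - t := by linarith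
    positivity
  have s0 : ∑ k ∈ Finset.range (N + 1), e k = 1 := by
    have := congrArg (Polynomial.aeval b) (bernsteinPolynomial.sum ℝ N)
    simpa using this
  have s1 : ∑ k ∈ Finset.range (N + 1), k • e k = N • b := by
    have := congrArg (Polynomial.aeval b) (bernsteinPolynomial.sum_smul ℝ N)
    simpa only [map_sum, map_nsmul, Polynomial.aeval_X] using this
  have s2 : ∑ k ∈ Finset.range (N + 1), (k * k) • e k = (N * (N - 1)) • b ^ 2 + N • b := by
    have := congrArg (Polynomial.aeval b) (bernsteinPolynomial.sum_mul_smul ℝ N)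
    simp only [map_sum, map_nsmul, Polynomial.aeval_X, map_pow] at this
    rw [← this, ← s1, ← Finset.sum_add_distrib]
    refine Finset.sum_congr rfl fun k _ => ?_
    rw [← add_smul]
    congr 1
    cases k with
    | zero => rfl
    | succ k => simp; ring
  have t0 : ∑ k ∈ Finset.range (N + 1), T (e k) = 1 := by rw [← map_sum, s0, hT1]
  have t1 : ∑ k ∈ Finset.range (N + 1), k • T (e k) = N • T b := by
    simp_rw [← map_nsmul]; rw [← map_sum, s1]
  have t2 : ∑ k ∈ Finset.range (N + 1), (k * k) • T (e k) = (N * (N - 1)) • T (b ^ 2) + N • T b := by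
    simp_rw [← map_nsmul]; rw [← map_sum, s2, map_add]
  set s : B := N • T b with hs
  have hsa : IsSelfAdjoint s := by
    rw [isSelfAdjoint_iff, hs, star_nsmul, (IsSelfAdjoint.of_nonneg (hT b hb0)).star_eq]
  have hpos : 0 ≤ ∑ k ∈ Finset.range (N + 1), ((k : B) - s) * T (e k) * ((k : B) - s) := by
    refine Finset.sum_nonneg fun k _ => ?_
    refine IsSelfAdjoint.conjugate_nonneg (hT _ (he k)) ?_
    exact (IsSelfAdjoint.natCast k).sub hsa
  have hid : ∑ k ∈ Finset.range (N + 1), ((k : B) - s) * T (e k) * ((k : B) - s) =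
      (∑ k ∈ Finset.range (N + 1), (k * k) • T (e k))
      - s * (∑ k ∈ Finset.range (N + 1), k • T (e k))
      - (∑ k ∈ Finset.range (N + 1), k • T (e k)) * s
      + s * (∑ k ∈ Finset.range (N + 1), T (e k)) * s := by
    simp only [Finset.mul_sum, Finset.sum_mul]
    rw [← Finset.sum_sub_distrib, ← Finset.sum_sub_distrib, ← Finset.sum_add_distrib]
    refine Finset.sum_congr rfl fun k _ => ?_
    have hk : Commute (k : B) (T (e k)) := Nat.cast_commute _ _
    simp only [nsmul_eq_mul, Nat.cast_mul, sub_mul, mul_sub]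
    rw [mul_assoc s (T (e k)) (k : B), ← hk.eq, mul_assoc (k : B) (T (e k)) (k : B), ← hk.eq]
    noncomm_ring
  rw [hid, t0, t1, t2] at hpos
  have hss : s * s = ((N * N : ℕ)) • (T b * T b) := by
    rw [hs, smul_mul_smul_comm]
  rw [← hss]
  have : (N * (N - 1)) • T (b ^ 2) + s - s * s - s * s + s * 1 * s =
    ((N * (N - 1)) • T (b ^ 2) + s) - s * s := by noncomm_ring
  rw [this] at hpos
  exact sub_nonneg.1 hpos

/-- Kadison's inequality. -/
lemma oap_kadison {A B : Type*} [CStarAlgebra A] [CStarAlgebra B]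
    [PartialOrder A] [StarOrderedRing A] [PartialOrder B] [StarOrderedRing B]
    (T : A →ₗ[ℝ] B) (hT1 : T 1 = 1) (hT : ∀ a, 0 ≤ a → 0 ≤ T a) (a : A) (ha : IsSelfAdjoint a) :
    T a * T a ≤ T (a * a) := by
  have unit : ∀ b : A, 0 ≤ b → b ≤ 1 → T b * T b ≤ T (b * b) := by
    intro b hb0 hb1
    have hlim : Filter.Tendsto (fun N : ℕ => T (b * b) + (1 / ((N : ℝ) + 1)) • (T b - T (b * b)))
        Filter.atTop (nhds (T (b * b) + (0 : ℝ) • (T b - T (b * b)))) :=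
      tendsto_const_nhds.add (tendsto_one_div_add_atTop_nhds_zero_nat.smul_const _)
    rw [zero_smul, add_zero] at hlim
    refine ge_of_tendsto hlim (Filter.Eventually.of_forall fun N => ?_)
    have h := oap_bernstein T hT1 hT b hb0 hb1 (N + 1)
    simp only [← Nat.cast_smul_eq_nsmul ℝ] at h
    have hM : (0 : ℝ) < (N : ℝ) + 1 := by positivity
    have h2 := smul_le_smul_of_nonneg_left h
      (by positivity : (0 : ℝ) ≤ (((N : ℝ) + 1) * ((N : ℝ) + 1))⁻¹)
    rw [smul_add, smul_smul, smul_smul, smul_smul] at h2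
    push_cast at h2
    rw [inv_mul_cancel₀ (by positivity), one_smul] at h2
    refine h2.trans (le_of_eq ?_)
    rw [pow_two]
    match_scalars <;> field_simp <;> ring
  let r : ℝ := ‖a‖ + 1
  have hr : 0 < r := by positivity
  let b : A := (2 * r)⁻¹ • (a + algebraMap ℝ A r)
  have hale : a ≤ algebraMap ℝ A r :=
    (ha.le_algebraMap_norm_self).trans (algebraMap_mono A (by simp [r]))
  have hage : -algebraMap ℝ A r ≤ a :=
    le_trans (neg_le_neg (algebraMap_mono A (by simp [r]))) ha.neg_algebraMap_norm_le_self
  have hb0 : 0 ≤ b := by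
    refine smul_nonneg (by positivity) ?_
    rw [← sub_neg_eq_add]
    exact sub_nonneg.2 hage
  have hb1 : b ≤ 1 := by
    have h3 : a + algebraMap ℝ A r ≤ (2 * r) • (1 : A) := by
      calc a + algebraMap ℝ A r ≤ algebraMap ℝ A r + algebraMap ℝ A r := by gcongr
        _ = (2 * r) • (1 : A) := by
          rw [Algebra.algebraMap_eq_smul_one, ← add_smul]; congr 1; ring
    have h4 := smul_le_smul_of_nonneg_left h3 (by positivity : 0 ≤ (2 * r)⁻¹)
    rwa [smul_smul, inv_mul_cancel₀ (by positivity), one_smul] at h4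
  have hab : a = (2 * r) • b - r • (1 : A) := by
    simp only [b]
    rw [smul_smul, mul_inv_cancel₀ (by positivity), one_smul, Algebra.algebraMap_eq_smul_one]
    abel
  have key := unit b hb0 hb1
  have e : T (a * a) - T a * T a = (4 * r ^ 2) • (T (b * b) - T b * T b) := by
    rw [hab]
    simp only [sub_mul, mul_sub, map_sub, map_smul, hT1, smul_mul_smul_comm, one_mul, mul_one]
    match_scalars <;> ring
  rw [← sub_nonneg, e]
  exact smul_nonneg (by positivity) (sub_nonneg.2 key)

lemma oap_pos {A B : Type*} [CStarAlgebra A] [CStarAlgebra B]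
    [PartialOrder A] [StarOrderedRing A] [PartialOrder B] [StarOrderedRing B]
    (T : A →ₗ[ℝ] B) (hT1 : T 1 = 1) (hsa : ∀ a, IsSelfAdjoint a → IsSelfAdjoint (T a))
    (hT : ∀ a, IsSelfAdjoint a → ‖T a‖ ≤ ‖a‖) (a : A) (ha : 0 ≤ a) : 0 ≤ T a := by
  have has : IsSelfAdjoint a := IsSelfAdjoint.of_nonneg ha
  have h1 : 0 ≤ algebraMap ℝ A ‖a‖ - a := sub_nonneg.2 has.le_algebraMap_norm_self
  have h2 : ‖algebraMap ℝ A ‖a‖ - a‖ ≤ ‖a‖ := by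
    rw [CStarAlgebra.norm_le_iff_le_algebraMap _ (norm_nonneg _) h1]
    exact sub_le_self _ ha
  have h3 := (hT _ (IsSelfAdjoint.of_nonneg h1)).trans h2
  have h4 := (hsa _ (IsSelfAdjoint.of_nonneg h1)).le_algebraMap_norm_self.trans
    (algebraMap_mono B h3)
  rw [map_sub, Algebra.algebraMap_eq_smul_one, map_smul, hT1, Algebra.algebraMap_eq_smul_one] at h4
  simpa using h4

lemma oap_norm_pow {A : Type*} [CStarAlgebra A] (y : A) (hy : IsStarNormal y) (n : ℕ) (hn : 0 < n) :
    ‖y ^ n‖ = ‖y‖ ^ n := by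
  refine le_antisymm (norm_pow_le' y hn) ?_
  rcases subsingleton_or_nontrivial A with h | h
  · rw [Subsingleton.elim y 0]; simp [hn.ne']
  obtain ⟨z, hz, hzy⟩ := (IsGreatest.norm_cfc (fun z : ℂ => z) y).1
  rw [cfc_id' ℂ y] at hzy
  have := norm_apply_le_norm_cfc (fun z : ℂ => z ^ n) y hz
  rw [cfc_pow_id y n hy, norm_pow] at this
  exact hzy ▸ this

lemma oap_root {A : Type*} [CStarAlgebra A] (a : A) (ha : IsSelfAdjoint a) (s : ℝ) (hs : s ≠ 0)
    (n : ℕ) (hn : 0 < n) :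
    ∃ y : A, IsStarNormal y ∧ y ^ n = a + (s * Complex.I : ℂ) • (1 : A) := by
  have han : IsStarNormal a := ha.isStarNormal
  let f : ℂ → ℂ := fun z => ((z.re : ℂ) + s * Complex.I) ^ ((n : ℂ)⁻¹)
  have hf : Continuous f := by
    refine Continuous.cpow (by fun_prop) (by fun_prop) fun z => ?_
    right
    simpa using hs
  refine ⟨cfc f a, cfc_predicate f a, ?_⟩
  rw [← cfc_pow f n a hf.continuousOn]
  have : (fun z => f z ^ n) = fun z : ℂ => (z.re : ℂ) + s * Complex.I := by
    funext z
    exact Complex.cpow_nat_inv_pow _ hn.ne'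
  rw [this]
  have h2 : cfc (fun z : ℂ => (z.re : ℂ) + s * Complex.I) a =
      cfc (fun z : ℂ => z + s * Complex.I) a := by
    refine cfc_congr fun z hz => ?_
    have := ha.mem_spectrum_eq_re hz
    rw [← this]
  rw [h2, cfc_add_const (s * Complex.I : ℂ) (fun z : ℂ => z) a, cfc_id' ℂ a,
    Algebra.algebraMap_eq_smul_one]


lemma oap_sa_of_norm {B : Type*} [CStarAlgebra B] (b : B) (C : ℝ)
    (h : ∀ s : ℝ, s ≠ 0 → ‖b + (s * Complex.I : ℂ) • (1 : B)‖ ^ 2 ≤ C + s ^ 2) :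
    IsSelfAdjoint b := by
  letI := CStarAlgebra.spectralOrder B
  haveI := CStarAlgebra.spectralOrderedRing B
  rcases subsingleton_or_nontrivial B with hB | hB
  · exact Subsingleton.elim _ _
  let y : B := (imaginaryPart b : B)
  have hy : IsSelfAdjoint y := (imaginaryPart b).2
  have hlam : ∀ l ∈ spectrum ℝ y, l = 0 := by
    intro l hl
    by_contra hl0
    have hbd : ∀ s : ℝ, s ≠ 0 → (l + s) ^ 2 ≤ C + s ^ 2 := by
      intro s hs
      refine le_trans ?_ (h s hs)
      rw [← sq_abs]
      gcongr
      have h1 : l + s ∈ spectrum ℝ (y + algebraMap ℝ B s) := by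
        rw [add_comm y]
        exact spectrum.add_mem_add_iff.2 hl
      refine (spectrum.norm_le_norm_of_mem h1).trans ?_
      have h2 : y + algebraMap ℝ B s =
          (imaginaryPart (b + (s * Complex.I : ℂ) • (1 : B)) : B) := by
        have h3 : (s * Complex.I : ℂ) • (1 : B) = Complex.I • ((s : ℝ) • (1 : B)) := by
          rw [mul_comm, mul_smul, Complex.coe_smul]
        have h4 : (realPart ((s : ℝ) • (1 : B)) : B) = s • 1 :=
          IsSelfAdjoint.coe_realPart ((IsSelfAdjoint.all s).smul (IsSelfAdjoint.one B))
        rw [h3, map_add, imaginaryPart_I_smul, AddSubgroup.coe_add, h4,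
          Algebra.algebraMap_eq_smul_one]
      rw [h2]
      exact imaginaryPart.norm_le (b + (s * Complex.I : ℂ) • (1 : B))
    have hC : 0 ≤ C + 1 := by
      have := h 1 one_ne_zero
      have h0 := sq_nonneg ‖b + ((1 : ℝ) * Complex.I : ℂ) • (1 : B)‖
      linarith
    have := hbd ((C + 1) / (2 * l) + 0) (by
      intro h0
      rw [add_zero, div_eq_zero_iff] at h0
      rcases h0 with h0 | h0
      · have h5 := hbd 1 one_ne_zero
        have h6 := hbd (-1) (by norm_num)
        have : 0 < l ^ 2 := by positivity
        nlinarith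
      · exact hl0 (by linarith))
    have e : 2 * l * ((C + 1) / (2 * l)) = C + 1 := by field_simp
    have h7 : 0 < l ^ 2 := by positivity
    nlinarith
  have hy0 : y = 0 := by
    rw [← norm_eq_zero]
    rcases CStarAlgebra.norm_or_neg_norm_mem_spectrum hy with h8 | h8
    · exact hlam _ h8
    · exact neg_eq_zero.1 (hlam _ h8)
  have hb := realPart_add_I_smul_imaginaryPart b
  have hy0' : (imaginaryPart b : B) = 0 := hy0
  rw [hy0', smul_zero, add_zero] at hb
  rw [← hb]
  exact (realPart b).2

/-- A unital linear bijection, isometric and hermitian on selfadjoint elements, is Jordan. -/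
lemma oap_jordan {A B : Type*} [CStarAlgebra A] [CStarAlgebra B] (J : A →ₗ[ℂ] B)
    (hbij : Function.Bijective J) (h1 : J 1 = 1) (hstar : ∀ a, J (star a) = star (J a))
    (hiso : ∀ a, IsSelfAdjoint a → ‖J a‖ = ‖a‖) (a b : A) :
    J (a * b + b * a) = J a * J b + J b * J a := by
  letI := CStarAlgebra.spectralOrder A
  haveI := CStarAlgebra.spectralOrderedRing A
  letI := CStarAlgebra.spectralOrder B
  haveI := CStarAlgebra.spectralOrderedRing B
  let E : A ≃ₗ[ℂ] B := LinearEquiv.ofBijective J hbij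
  have hEJ : ∀ a, E a = J a := fun a => rfl
  have hJsa : ∀ a, IsSelfAdjoint a → IsSelfAdjoint (J a) := fun a ha => by
    rw [isSelfAdjoint_iff, ← hstar, ha.star_eq]
  have hSsa : ∀ b, IsSelfAdjoint b → IsSelfAdjoint (E.symm b) := fun b hb => by
    rw [isSelfAdjoint_iff]
    apply hbij.1
    rw [hstar, ← hEJ, E.apply_symm_apply, hb.star_eq]
  have hJpos : ∀ a, 0 ≤ a → 0 ≤ J a :=
    oap_pos (J.restrictScalars ℝ) h1 hJsa (fun a ha => (hiso a ha).le)
  have hS1 : E.symm 1 = 1 := by rw [LinearEquiv.symm_apply_eq, hEJ, h1]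
  have hSpos : ∀ b, 0 ≤ b → 0 ≤ E.symm b :=
    oap_pos ((E.symm : B →ₗ[ℂ] A).restrictScalars ℝ) hS1 hSsa (fun b hb => by
      have := hiso _ (hSsa b hb)
      rw [← hEJ, E.apply_symm_apply] at this
      exact this.ge)
  have hsq : ∀ a, IsSelfAdjoint a → J (a * a) = J a * J a := by
    intro a ha
    refine le_antisymm ?_ (oap_kadison (J.restrictScalars ℝ) h1 hJpos a ha)
    have hk : E.symm (J a) * E.symm (J a) ≤ E.symm (J a * J a) :=
      oap_kadison ((E.symm : B →ₗ[ℂ] A).restrictScalars ℝ) hS1 hSpos (J a) (hJsa a ha)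
    rw [← hEJ a, E.symm_apply_apply] at hk
    have := hJpos _ (sub_nonneg.2 hk)
    rw [map_sub, ← hEJ (E.symm _), E.apply_symm_apply] at this
    exact sub_nonneg.1 this
  have hsa2 : ∀ a b, IsSelfAdjoint a → IsSelfAdjoint b →
      J (a * b + b * a) = J a * J b + J b * J a := by
    intro a b ha hb
    have h := hsq _ (ha.add hb)
    have e1 : (a + b) * (a + b) = a * a + b * b + (a * b + b * a) := by noncomm_ring
    rw [e1, map_add, map_add, hsq a ha, hsq b hb, map_add J a b] at h
    have e2 : (J a + J b) * (J a + J b) = J a * J a + J b * J b + (J a * J b + J b * J a) := by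
      noncomm_ring
    rw [e2] at h
    exact add_left_cancel h
  have hext : ∀ a, (∀ b, IsSelfAdjoint b → J (a * b + b * a) = J a * J b + J b * J a) →
      ∀ b, J (a * b + b * a) = J a * J b + J b * J a := by
    intro a ha b
    have hr := ha _ (realPart b).2
    have hi := ha _ (imaginaryPart b).2
    rw [← realPart_add_I_smul_imaginaryPart b]
    have e1 : a * ((realPart b : A) + Complex.I • (imaginaryPart b : A)) +
        ((realPart b : A) + Complex.I • (imaginaryPart b : A)) * a =
        (a * (realPart b : A) + (realPart b : A) * a) +
          Complex.I • (a * (imaginaryPart b : A) + (imaginaryPart b : A) * a) := by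
      simp only [mul_add, add_mul, mul_smul_comm, smul_mul_assoc, smul_add]
      abel
    rw [e1, map_add, map_smul, hr, hi, map_add J, map_smul]
    simp only [mul_add, add_mul, mul_smul_comm, smul_mul_assoc, smul_add]
    abel
  refine hext a (fun b hb => ?_) b
  have := hext b (fun a ha => hsa2 b a hb ha) a
  rw [add_comm, this, add_comm]

lemma oap_jordan_pow {A B : Type*} [CStarAlgebra A] [CStarAlgebra B] (J : A →ₗ[ℂ] B)
    (h1 : J 1 = 1) (hJ : ∀ a b, J (a * b + b * a) = J a * J b + J b * J a) (a : A) (k : ℕ) :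
    J (a ^ k) = J a ^ k := by
  induction k with
  | zero => simp [h1]
  | succ k ih =>
    have h := hJ a (a ^ k)
    rw [ih, ← pow_succ', ← pow_succ, ← pow_succ', ← pow_succ, ← two_smul ℂ (a ^ (k + 1)),
      ← two_smul ℂ (J a ^ (k + 1)), map_smul] at h
    exact smul_right_injective B (two_ne_zero (α := ℂ)) h

theorem stmt_19 {A B : Type*} [CStarAlgebra A] [CStarAlgebra B]
    (n : ℕ) (hn : 0 < n) (P : A → B) (hP : IsHomogPolynomial n P)
    (horth : ∀ a b : A, a * b = 0 → b * a = 0 → P (a + b) = P a + P b)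
    (hunitary : P 1 ∈ unitary B)
    (hspan : Submodule.span ℂ (Set.range P) = ⊤)
    (hiso : ∀ x : A, IsStarNormal x → ‖P x‖ = ‖x‖ ^ n) :
    ∃ J : A →ₗ[ℂ] B, Function.Bijective J ∧
      (∀ a b : A, J (a * b + b * a) = J a * J b + J b * J a) ∧
      (∀ a : A, J (star a) = star (J a)) ∧
      ∀ a : A, P a = P 1 * (J a) ^ n := by
  obtain ⟨L, hLsym, hLP⟩ := hP
  obtain ⟨m, rfl⟩ : ∃ m, n = m + 1 := ⟨n - 1, by omega⟩
  have hrep : ∀ x, P x = L (Fin.cons (x ^ (m + 1)) (fun _ => 1)) := fun x => by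
    rw [hLP]
    exact oap_repr L hLsym (fun a b hab hba => by
      have := horth a b hab hba
      rwa [hLP, hLP, hLP] at this) x
  let T : A →ₗ[ℂ] B :=
    { toFun := fun a => L (Fin.cons a (fun _ => 1))
      map_add' := fun a b => L.cons_add (fun _ : Fin m => (1 : A)) a b
      map_smul' := fun c a => L.cons_smul (fun _ : Fin m => (1 : A)) c a }
  have hT : ∀ x, P x = T (x ^ (m + 1)) := hrep
  let J : A →ₗ[ℂ] B := (LinearMap.mulLeft ℂ (star (P 1))).comp T
  have hJ : ∀ a, J a = star (P 1) * T a := fun a => rfl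
  have hTJ : ∀ a, T a = P 1 * J a := fun a => by
    rw [hJ, ← mul_assoc, Unitary.mul_star_self_of_mem hunitary, one_mul]
  have hJ1 : J 1 = 1 := by
    have := hT 1
    rw [one_pow] at this
    rw [hJ, ← this, Unitary.star_mul_self_of_mem hunitary]
  have hnorm : ∀ y : A, IsStarNormal y → ‖J (y ^ (m + 1))‖ = ‖y ^ (m + 1)‖ := by
    intro y hy
    rw [hJ, CStarRing.norm_mem_unitary_mul _ (Unitary.star_mem hunitary), ← hT, hiso y hy,
      oap_norm_pow y hy _ hn]
  have hJs : ∀ a, IsSelfAdjoint a → ∀ s : ℝ, s ≠ 0 →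
      ‖J a + (s * Complex.I : ℂ) • (1 : B)‖ = ‖a + (s * Complex.I : ℂ) • (1 : A)‖ := by
    intro a ha s hs
    obtain ⟨y, hy, hya⟩ := oap_root a ha s hs (m + 1) hn
    have := hnorm y hy
    rwa [hya, map_add, map_smul, hJ1] at this
  have hJiso : ∀ a, IsSelfAdjoint a → ‖J a‖ = ‖a‖ := by
    intro a ha
    have := Continuous.ext_on (f := fun s : ℝ => ‖J a + (s * Complex.I : ℂ) • (1 : B)‖)
      (g := fun s : ℝ => ‖a + (s * Complex.I : ℂ) • (1 : A)‖)
      (dense_compl_singleton (0 : ℝ)) (by fun_prop) (by fun_prop) (fun s hs => hJs a ha s hs)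
    simpa using congrFun this 0
  have hJsa : ∀ a, IsSelfAdjoint a → IsSelfAdjoint (J a) := by
    intro a ha
    refine oap_sa_of_norm (J a) (‖a‖ ^ 2) fun s hs => ?_
    rw [hJs a ha s hs, pow_two, ← CStarRing.norm_star_mul_self]
    have e : star (a + (s * Complex.I : ℂ) • (1 : A)) * (a + (s * Complex.I : ℂ) • (1 : A)) =
        a * a + ((s ^ 2 : ℝ) : ℂ) • (1 : A) := by
      rw [star_add, ha.star_eq, star_smul, star_one]
      simp only [mul_add, add_mul, mul_smul_comm, smul_mul_assoc, mul_one, one_mul]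
      have : star (s * Complex.I : ℂ) = -(s * Complex.I) := by
        simp
      rw [this]
      match_scalars
      · ring
      · ring
      · push_cast
        linear_combination (-(s : ℂ) ^ 2) * Complex.I_sq
    rw [e]
    have h1le : ‖(1 : A)‖ ≤ 1 := by
      rcases subsingleton_or_nontrivial A with h | h
      · rw [Subsingleton.elim (1 : A) 0]; simp
      · exact (CStarRing.norm_one).le
    refine (norm_add_le _ _).trans ?_
    rw [norm_smul, Complex.norm_real, Real.norm_eq_abs, abs_of_nonneg (sq_nonneg s)]
    have h2 := norm_mul_le a a
    have h3 := mul_le_mul_of_nonneg_left h1le (sq_nonneg s)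
    nlinarith
  have hJstar : ∀ a, J (star a) = star (J a) := by
    intro a
    have hr := hJsa _ (realPart a).2
    have hi := hJsa _ (imaginaryPart a).2
    have hr' : star (realPart a : A) = (realPart a : A) := (realPart a).2
    have hi' : star (imaginaryPart a : A) = (imaginaryPart a : A) := (imaginaryPart a).2
    rw [← realPart_add_I_smul_imaginaryPart a, star_add, star_smul, hr', hi', map_add, map_add,
      map_smul, map_smul, star_add, star_smul, hr.star_eq, hi.star_eq]
  have hinj : Function.Injective J := by
    rw [← LinearMap.ker_eq_bot, LinearMap.ker_eq_bot']
    have hsa0 : ∀ a, IsSelfAdjoint a → J a = 0 → a = 0 := fun a ha h => by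
      rw [← norm_eq_zero, ← hJiso a ha, h, norm_zero]
    intro a ha
    have hr : J (realPart a : A) = 0 := by
      rw [realPart_apply_coe, LinearMap.map_smul_of_tower, map_add, hJstar, ha]; simp
    have hi : J (imaginaryPart a : A) = 0 := by
      rw [imaginaryPart_apply_coe, map_smul, LinearMap.map_smul_of_tower, map_sub, hJstar, ha]; simp
    rw [← realPart_add_I_smul_imaginaryPart a, hsa0 _ (realPart a).2 hr,
      hsa0 _ (imaginaryPart a).2 hi]
    simp
  have hsurj : Function.Surjective J := by
    have hTtop : LinearMap.range T = ⊤ := by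
      rw [eq_top_iff, ← hspan, Submodule.span_le]
      rintro _ ⟨x, rfl⟩
      exact ⟨_, (hT x).symm⟩
    intro b
    obtain ⟨a, ha⟩ := LinearMap.range_eq_top.1 hTtop (P 1 * b)
    refine ⟨a, ?_⟩
    rw [hJ, ha, ← mul_assoc, Unitary.star_mul_self_of_mem hunitary, one_mul]
  have hjor := oap_jordan J ⟨hinj, hsurj⟩ hJ1 hJstar hJiso
  refine ⟨J, ⟨hinj, hsurj⟩, hjor, hJstar, fun a => ?_⟩
  rw [← oap_jordan_pow J hJ1 hjor, ← hTJ, ← hT]
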